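/- Let {Y_t}_{t∈ℤ} be a stationary ergodic sequence with E|Y_t| < ∞, and let W : [−1/2, 1/2] → ℝ be a kernel function of bounded variation with ∫_{−1/2}^{1/2} W(x) dx = 1. Then Σ_{k=−M}^{M} (1/(2M+1)) W(k/(2M+1)) Y_k converges almost surely to μ = E(Y_0) as M → ∞. -/

import Mathlib

open MeasureTheory ProbabilityTheory Filter Set
open scoped ENNReal NNReal Topology

noncomputable section

/-- the two-sided iterates `T^t` of an invertible transformation. -/
def zIter {Ωs : Type*} (T : Ωs ≃ Ωs) : ℤ → Ωs → Ωs
  | Int.ofNat n => (⇑T)^[n]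
  | Int.negSucc n => (⇑T.symm)^[n + 1]

/-!
Abel summation reduces the kernel average to the partial sums of `Y k - μ` over windows contained
in `[-M, M]`, weighted by the variation of `W`. These partial sums are `o(M)` uniformly in the
window, by the pointwise ergodic theorem for `T` and for `T⁻¹`. What is left is `μ` times a
Riemann sum of `W`, whose error is at most the mesh `1 / (2M + 1)` times the variation, because
the points `k / (2M + 1)` are the midpoints of `2M + 1` equal cells tiling `[-1/2, 1/2]`.

The ergodic theorem comes from the running maximum `m n` of the Birkhoff sums of `g`, which
satisfies `m (n + 1) = max 0 (g + m n ∘ T)`. If these maxima are almost surely unbounded, then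
`m (n + 1) - m n ∘ T` converges to `g` while its integral is nonnegative, so `0 ≤ ∫ g`. Hence, when
`∫ g < 0`, ergodicity makes the Birkhoff sums almost surely bounded above; take `g = f - c` with `c`
just above the mean of `f`.
-/

section PointwiseErgodic

variable {α : Type*} {T : α → α} {g : α → ℝ}

/-- The running maximum `max_{k ≤ n} S_k` of the Birkhoff sums of `g`, where `S_0 = 0`. -/
def birkhoffMax (T : α → α) (g : α → ℝ) (n : ℕ) : α → ℝ :=
  partialSups (birkhoffSum T g) n

variable (T g)

lemma birkhoffMax_zero : birkhoffMax T g 0 = 0 := by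
  rw [birkhoffMax, partialSups_zero, birkhoffSum_zero']

lemma monotone_birkhoffMax : Monotone (birkhoffMax T g) :=
  (partialSups (birkhoffSum T g)).monotone

lemma birkhoffSum_le_birkhoffMax {k n : ℕ} (h : k ≤ n) (x : α) :
    birkhoffSum T g k x ≤ birkhoffMax T g n x :=
  le_partialSups_of_le (birkhoffSum T g) h x

lemma birkhoffMax_nonneg (n : ℕ) (x : α) : 0 ≤ birkhoffMax T g n x := by
  simpa only [birkhoffSum_zero] using birkhoffSum_le_birkhoffMax T g n.zero_le x

lemma birkhoffMax_succ (n : ℕ) (x : α) :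
    birkhoffMax T g (n + 1) x = max 0 (g x + birkhoffMax T g n (T x)) := by
  induction n with
  | zero =>
    simp only [birkhoffMax, Pi.partialSups_apply, ← Order.succ_eq_add_one, partialSups_succ]
    simp [birkhoffSum]
  | succ n ih =>
    have hsucc (m : ℕ) (y : α) : birkhoffMax T g (m + 1) y =
        max (birkhoffMax T g m y) (birkhoffSum T g (m + 1) y) := by
      rw [birkhoffMax, ← Order.succ_eq_add_one, partialSups_succ]; rfl
    rw [hsucc, ih, hsucc n (T x), birkhoffSum_succ' T g (n + 1), max_assoc, max_add_add_left]

lemma birkhoffMax_succ_sub (n : ℕ) (x : α) :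
    birkhoffMax T g (n + 1) x - birkhoffMax T g n (T x) =
      max (-birkhoffMax T g n (T x)) (g x) := by
  rw [birkhoffMax_succ, ← max_sub_sub_right, zero_sub, add_sub_cancel_right]

lemma abs_birkhoffMax_succ_sub_le (n : ℕ) (x : α) :
    |birkhoffMax T g (n + 1) x - birkhoffMax T g n (T x)| ≤ |g x| := by
  rw [birkhoffMax_succ_sub]
  have hnonneg := birkhoffMax_nonneg T g n (T x)
  exact abs_le.2 ⟨le_max_of_le_right (neg_abs_le _),
    max_le (by linarith [abs_nonneg (g x)]) (le_abs_self _)⟩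

lemma bddAbove_range_birkhoffSum_apply_iff (x : α) :
    BddAbove (range fun n => birkhoffSum T g n (T x)) ↔
      BddAbove (range fun n => birkhoffSum T g n x) := by
  simp only [bddAbove_def, forall_mem_range]
  constructor
  · rintro ⟨C, hC⟩
    refine ⟨max 0 (g x + C), fun n => ?_⟩
    cases n with
    | zero => simp
    | succ n => exact birkhoffSum_succ' T g n x ▸ le_max_of_le_right (by gcongr; exact hC n)
  · rintro ⟨C, hC⟩
    refine ⟨C - g x, fun n => ?_⟩
    linarith [hC (n + 1), birkhoffSum_succ' T g n x]

variable {T g}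

variable [MeasurableSpace α] {μ : Measure α}

lemma nullMeasurableSet_bddAbove_range {ι : Type*} [Countable ι] {F : ι → α → ℝ}
    (hF : ∀ i, AEMeasurable (F i) μ) :
    NullMeasurableSet {x | BddAbove (range fun i => F i x)} μ := by
  refine (measurableSet_bddAbove_range fun i =>
    (hF i).measurable_mk).nullMeasurableSet.congr ?_
  filter_upwards [ae_all_iff.2 fun i => (hF i).ae_eq_mk] with x hx
  exact congrArg (fun u => BddAbove (range u)) (funext fun i => (hx i).symm)

lemma integrable_birkhoffSum (hT : MeasurePreserving T μ μ) (hg : Integrable g μ) (n : ℕ) :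
    Integrable (birkhoffSum T g n) μ :=
  integrable_finsetSum _ fun k _ => (hT.iterate k).integrable_comp_of_integrable hg

lemma integrable_birkhoffMax (hT : MeasurePreserving T μ μ) (hg : Integrable g μ) (n : ℕ) :
    Integrable (birkhoffMax T g n) μ := by
  induction n with
  | zero => exact birkhoffMax_zero T g ▸ integrable_zero _ _ _
  | succ n ih =>
    rw [funext (birkhoffMax_succ T g n)]
    exact (integrable_zero α ℝ μ).sup (hg.add (hT.integrable_comp_of_integrable ih))

lemma integral_birkhoffMax_succ_sub_nonneg (hT : MeasurePreserving T μ μ) (hg : Integrable g μ)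
    (n : ℕ) : 0 ≤ ∫ x, (birkhoffMax T g (n + 1) x - birkhoffMax T g n (T x)) ∂μ := by
  have hint := integrable_birkhoffMax hT hg
  have hintT (n : ℕ) : Integrable (fun x => birkhoffMax T g n (T x)) μ :=
    hT.integrable_comp_of_integrable (hint n)
  have hinv : ∫ x, birkhoffMax T g n (T x) ∂μ = ∫ x, birkhoffMax T g n x ∂μ := by
    conv_rhs => rw [← hT.map_eq]
    refine (integral_map hT.aemeasurable ?_).symm
    exact hT.map_eq.symm ▸ (hint n).aestronglyMeasurable
  rw [integral_sub (hint (n + 1)) (hintT n), hinv, sub_nonneg]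
  exact integral_mono (hint n) (hint (n + 1)) (monotone_birkhoffMax T g n.le_succ)

lemma integral_nonneg_of_ae_not_bddAbove_birkhoffSum (hT : MeasurePreserving T μ μ)
    (hg : Integrable g μ) (hunbdd : ∀ᵐ x ∂μ, ¬ BddAbove (range fun n => birkhoffSum T g n x)) :
    0 ≤ ∫ x, g x ∂μ := by
  have hint := integrable_birkhoffMax hT hg
  -- Once `-g x ≤ birkhoffMax T g n (T x)`, the increment `max (-birkhoffMax T g n (T x)) (g x)`
  -- equals `g x`.
  have hlim : Tendsto (fun n => ∫ x, (birkhoffMax T g (n + 1) x - birkhoffMax T g n (T x)) ∂μ)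
      atTop (𝓝 (∫ x, g x ∂μ)) := by
    refine tendsto_integral_of_dominated_convergence (fun x => |g x|) (fun n => ?_) hg.abs
      (fun n => ae_of_all _ fun x => abs_birkhoffMax_succ_sub_le T g n x) ?_
    · exact ((hint (n + 1)).sub (hT.integrable_comp_of_integrable (hint n))).aestronglyMeasurable
    · filter_upwards [hunbdd] with x hx
      rw [← bddAbove_range_birkhoffSum_apply_iff, not_bddAbove_iff] at hx
      obtain ⟨-, ⟨k, rfl⟩, hk⟩ := hx (-g x)
      refine tendsto_const_nhds.congr' ?_
      filter_upwards [eventually_ge_atTop k] with n hn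
      have hge := birkhoffSum_le_birkhoffMax T g hn (T x)
      rw [birkhoffMax_succ_sub, max_eq_right (by linarith)]
  exact ge_of_tendsto' hlim fun n => integral_birkhoffMax_succ_sub_nonneg hT hg n

theorem ae_bddAbove_birkhoffSum_of_integral_neg (hT : Ergodic T μ) (hg : Integrable g μ)
    (hneg : ∫ x, g x ∂μ < 0) : ∀ᵐ x ∂μ, BddAbove (range fun n => birkhoffSum T g n x) := by
  have hmp := hT.toMeasurePreserving
  have hmeas : NullMeasurableSet {x | BddAbove (range fun n => birkhoffSum T g n x)} μ :=
    nullMeasurableSet_bddAbove_range fun n => (integrable_birkhoffSum hmp hg n).aemeasurable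
  have hinv : T ⁻¹' {x | BddAbove (range fun n => birkhoffSum T g n x)} =
      {x | BddAbove (range fun n => birkhoffSum T g n x)} :=
    Set.ext (bddAbove_range_birkhoffSum_apply_iff T g)
  rcases hT.quasiErgodic.ae_mem_or_ae_notMem₀ hmeas hinv.eventuallyEq with hbdd | hunbdd
  · exact hbdd
  · exact absurd (integral_nonneg_of_ae_not_bddAbove_birkhoffSum hmp hg hunbdd) hneg.not_ge

variable [IsFiniteMeasure μ] {f : α → ℝ} {c : ℝ}

lemma ae_eventually_birkhoffAverage_lt (hT : Ergodic T μ) (hf : Integrable f μ)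
    (hc : ⨍ x, f x ∂μ < c) : ∀ᵐ x ∂μ, ∀ᶠ n in atTop, birkhoffAverage ℝ T f n x < c := by
  rcases eq_zero_or_neZero μ with rfl | _
  · simp
  obtain ⟨d, hfd, hdc⟩ := exists_between hc
  have hneg : ∫ x, (f x - d) ∂μ < 0 := by
    have hpos : 0 < μ.real univ := measureReal_univ_pos
    rw [integral_sub hf (integrable_const d), integral_const, ← measure_smul_average,
      ← smul_sub, smul_eq_mul]
    exact mul_neg_of_pos_of_neg hpos (sub_neg.2 hfd)
  filter_upwards [ae_bddAbove_birkhoffSum_of_integral_neg hT (hf.sub (integrable_const d)) hneg]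
    with x ⟨C, hC⟩
  have hsmall : ∀ᶠ n : ℕ in atTop, d + C / n < c :=
    (tendsto_const_nhds.add (tendsto_const_div_atTop_nhds_zero_nat C)).eventually_lt_const
      (by simpa using hdc)
  filter_upwards [hsmall, eventually_gt_atTop 0] with n hn hn0
  have hsum : birkhoffSum T f n x - n * d ≤ C := by
    simpa [birkhoffSum] using hC (mem_range_self n)
  have hnpos : (0 : ℝ) < n := Nat.cast_pos.2 hn0
  calc birkhoffAverage ℝ T f n x = birkhoffSum T f n x / n := by
        rw [birkhoffAverage, smul_eq_mul, inv_mul_eq_div]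
    _ ≤ (n * d + C) / n := by gcongr; linarith
    _ = d + C / n := by rw [add_div, mul_div_cancel_left₀ d hnpos.ne']
    _ < c := hn

lemma ae_eventually_lt_birkhoffAverage (hT : Ergodic T μ) (hf : Integrable f μ)
    (hc : c < ⨍ x, f x ∂μ) : ∀ᵐ x ∂μ, ∀ᶠ n in atTop, c < birkhoffAverage ℝ T f n x := by
  have hneg : ⨍ x, (-f) x ∂μ < -c := by simpa [average_neg] using hc
  filter_upwards [ae_eventually_birkhoffAverage_lt hT hf.neg hneg] with x hx
  filter_upwards [hx] with n hn
  simpa [birkhoffAverage_neg] using hn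

theorem ae_tendsto_birkhoffAverage (hT : Ergodic T μ) (hf : Integrable f μ) :
    ∀ᵐ x ∂μ, Tendsto (birkhoffAverage ℝ T f · x) atTop (𝓝 (⨍ x, f x ∂μ)) := by
  have hupper : ∀ᵐ x ∂μ, ∀ q : {q : ℚ // ⨍ x, f x ∂μ < q},
      ∀ᶠ n in atTop, birkhoffAverage ℝ T f n x < q :=
    ae_all_iff.2 fun q => ae_eventually_birkhoffAverage_lt hT hf q.2
  have hlower : ∀ᵐ x ∂μ, ∀ q : {q : ℚ // q < ⨍ x, f x ∂μ},
      ∀ᶠ n in atTop, q < birkhoffAverage ℝ T f n x :=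
    ae_all_iff.2 fun q => ae_eventually_lt_birkhoffAverage hT hf q.2
  filter_upwards [hlower, hupper] with x hlower hupper
  refine tendsto_order.2 ⟨fun a ha => ?_, fun b hb => ?_⟩
  · obtain ⟨q, haq, hq⟩ := exists_rat_btwn ha
    exact (hlower ⟨q, hq⟩).mono fun _ => haq.trans
  · obtain ⟨q, hq, hqb⟩ := exists_rat_btwn hb
    exact (hupper ⟨q, hq⟩).mono fun _ hn => hn.trans hqb

end PointwiseErgodic

section BoundedVariation

variable {W : ℝ → ℝ} {a b : ℝ}

lemma intervalIntegrable_of_boundedVariationOn (hW : BoundedVariationOn W (uIcc a b)) :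
    IntervalIntegrable W volume a b := by
  obtain ⟨p, q, hp, hq, rfl⟩ := hW.locallyBoundedVariationOn.exists_monotoneOn_sub_monotoneOn
  exact hp.intervalIntegrable.sub hq.intervalIntegrable

lemma abs_sub_mul_sub_intervalIntegral_le (hab : a ≤ b) (hW : BoundedVariationOn W (Icc a b))
    {ξ : ℝ} (hξ : ξ ∈ Icc a b) :
    |(b - a) * W ξ - ∫ x in a..b, W x| ≤ (b - a) * (eVariationOn W (Icc a b)).toReal := by
  have hint := intervalIntegrable_of_boundedVariationOn (uIcc_of_le hab ▸ hW)
  have hconst : (b - a) * W ξ = ∫ _ in a..b, W ξ := by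
    rw [intervalIntegral.integral_const, smul_eq_mul]
  rw [hconst, ← intervalIntegral.integral_sub intervalIntegrable_const hint, mul_comm,
    ← abs_of_nonneg (sub_nonneg.2 hab)]
  refine intervalIntegral.norm_integral_le_of_norm_le_const (E := ℝ) fun x hx => ?_
  exact hW.dist_le hξ (Ioc_subset_Icc_self (uIoc_of_le hab ▸ hx))

lemma sum_toReal_eVariationOn_Icc {E : Type*} [PseudoEMetricSpace E] {f : ℝ → E} {x : ℕ → ℝ}
    (hx : Monotone x) {n : ℕ} (hf : BoundedVariationOn f (Icc (x 0) (x n))) :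
    ∑ j ∈ Finset.range n, (eVariationOn f (Icc (x j) (x (j + 1)))).toReal =
      (eVariationOn f (Icc (x 0) (x n))).toReal := by
  rw [← eVariationOn.sum' f hx, ENNReal.toReal_sum]
  intro j hj
  exact hf.mono (Icc_subset_Icc (hx j.zero_le) (hx (Finset.mem_range.1 hj)))

theorem abs_riemannSum_sub_intervalIntegral_le {x ξ : ℕ → ℝ} (hx : Monotone x) {n : ℕ} {δ : ℝ}
    (hδ : ∀ j < n, x (j + 1) - x j ≤ δ) (hξ : ∀ j < n, ξ j ∈ Icc (x j) (x (j + 1)))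
    (hW : BoundedVariationOn W (Icc (x 0) (x n))) :
    |∑ j ∈ Finset.range n, (x (j + 1) - x j) * W (ξ j) - ∫ t in x 0..x n, W t| ≤
      δ * (eVariationOn W (Icc (x 0) (x n))).toReal := by
  have hWcell (j : ℕ) (hj : j < n) : BoundedVariationOn W (Icc (x j) (x (j + 1))) :=
    hW.mono (Icc_subset_Icc (hx j.zero_le) (hx hj))
  have hint (j : ℕ) (hj : j < n) : IntervalIntegrable W volume (x j) (x (j + 1)) :=
    intervalIntegrable_of_boundedVariationOn (uIcc_of_le (hx j.le_succ) ▸ hWcell j hj)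
  rw [← intervalIntegral.sum_integral_adjacent_intervals hint, ← Finset.sum_sub_distrib,
    ← sum_toReal_eVariationOn_Icc hx hW, Finset.mul_sum]
  refine (Finset.abs_sum_le_sum_abs _ _).trans (Finset.sum_le_sum fun j hj => ?_)
  have hj := Finset.mem_range.1 hj
  exact (abs_sub_mul_sub_intervalIntegral_le (hx j.le_succ) (hWcell j hj) (hξ j hj)).trans
    (mul_le_mul_of_nonneg_right (hδ j hj) ENNReal.toReal_nonneg)

lemma sum_norm_sub_le_toReal_eVariationOn {α E : Type*} [LinearOrder α] [SeminormedAddCommGroup E]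
    {f : α → E} {s : Set α} (hf : BoundedVariationOn f s) {ξ : ℕ → α} {n : ℕ}
    (hmono : MonotoneOn ξ (Icc 0 n)) (hmem : ∀ j ∈ Icc 0 n, ξ j ∈ s) :
    ∑ j ∈ Finset.range n, ‖f (ξ (j + 1)) - f (ξ j)‖ ≤ (eVariationOn f s).toReal := by
  have hle := eVariationOn.sum_le_of_monotoneOn_Icc (f := f) hmono hmem
  rw [← Finset.range_eq_Ico] at hle
  rw [← ENNReal.ofReal_le_iff_le_toReal hf,
    ENNReal.ofReal_sum_of_nonneg fun _ _ => norm_nonneg _]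
  simpa only [edist_eq_enorm_sub, ofReal_norm] using hle

end BoundedVariation

section Summation

variable {E : Type*} [NormedAddCommGroup E]

lemma norm_sum_range_smul_le_of_norm_sum_range_le {R : Type*} [SeminormedRing R] [Module R E]
    [IsBoundedSMul R E] (w : ℕ → R) (z : ℕ → E) {n : ℕ} {B : ℝ}
    (hB : ∀ i ≤ n, ‖∑ j ∈ Finset.range i, z j‖ ≤ B) :
    ‖∑ j ∈ Finset.range n, w j • z j‖ ≤
      (‖w (n - 1)‖ + ∑ j ∈ Finset.range (n - 1), ‖w (j + 1) - w j‖) * B := by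
  rw [Finset.sum_range_by_parts, add_mul, Finset.sum_mul]
  refine (norm_sub_le _ _).trans (add_le_add ?_ ((norm_sum_le _ _).trans
    (Finset.sum_le_sum fun j hj => ?_))) <;> refine (norm_smul_le _ _).trans ?_ <;> gcongr
  · exact hB n le_rfl
  · exact hB (j + 1) (by have := Finset.mem_range.1 hj; omega)

lemma eventually_forall_le_norm_le {S : ℕ → E} (hS : S =o[atTop] fun n => (n : ℝ)) {ε : ℝ}
    (hε : 0 < ε) : ∀ᶠ n : ℕ in atTop, ∀ k ≤ n, ‖S k‖ ≤ ε * n := by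
  obtain ⟨N, hN⟩ := eventually_atTop.1 (hS.bound hε)
  have hinit : ∀ᶠ n : ℕ in atTop, ∀ k ∈ Finset.range N, ‖S k‖ ≤ ε * n :=
    (eventually_all_finset _).2 fun k _ =>
      (tendsto_natCast_atTop_atTop.const_mul_atTop hε).eventually_ge_atTop _
  filter_upwards [hinit] with n hn k hk
  rcases lt_or_ge k N with hkN | hNk
  · exact hn k (Finset.mem_range.2 hkN)
  · calc ‖S k‖ ≤ ε * ‖(k : ℝ)‖ := hN k hNk
      _ ≤ ε * n := by rw [Real.norm_natCast]; gcongr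

lemma norm_sum_range_smul_le_of_boundedVariationOn {α R : Type*} [LinearOrder α] [SeminormedRing R]
    [Module R E] [IsBoundedSMul R E] {f : α → R} {s : Set α} (hf : BoundedVariationOn f s)
    {ξ : ℕ → α} {n : ℕ} (hmono : MonotoneOn ξ (Icc 0 n)) (hmem : ∀ j ∈ Icc 0 n, ξ j ∈ s)
    {z : ℕ → E} {B : ℝ} (hB : ∀ i ≤ n + 1, ‖∑ j ∈ Finset.range i, z j‖ ≤ B) :
    ‖∑ j ∈ Finset.range (n + 1), f (ξ j) • z j‖ ≤
      (‖f (ξ n)‖ + (eVariationOn f s).toReal) * B := by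
  have hB0 : 0 ≤ B := (norm_nonneg _).trans (hB 0 (Nat.zero_le _))
  refine (norm_sum_range_smul_le_of_norm_sum_range_le _ z hB).trans ?_
  rw [Nat.add_sub_cancel]
  gcongr
  exact sum_norm_sub_le_toReal_eVariationOn hf hmono hmem

variable [NormedSpace ℝ E]

lemma isLittleO_sum_range_sub_of_tendsto_average {u : ℕ → E} {m : E}
    (hu : Tendsto (fun n : ℕ => (n : ℝ)⁻¹ • ∑ k ∈ Finset.range n, u k) atTop (𝓝 m)) :
    (fun n => ∑ k ∈ Finset.range n, (u k - m)) =o[atTop] fun n => (n : ℝ) := by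
  have hsub : (fun n : ℕ => (n : ℝ)⁻¹ • ∑ k ∈ Finset.range n, u k - m) =o[atTop]
      fun _ => (1 : ℝ) :=
    (Asymptotics.isLittleO_one_iff ℝ).2 (tendsto_sub_nhds_zero_iff.2 hu)
  refine ((Asymptotics.isBigO_refl (fun n : ℕ => (n : ℝ)) atTop).smul_isLittleO hsub).congr'
    ?_ (by simp)
  filter_upwards [eventually_ne_atTop 0] with n hn
  rw [smul_sub, smul_inv_smul₀ (Nat.cast_ne_zero.2 hn), Finset.sum_sub_distrib, Finset.sum_const,
    Finset.card_range, Nat.cast_smul_eq_nsmul]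

end Summation

section TwoSided

variable {E : Type*}

lemma sum_Icc_neg_natCast_eq_sum_range [AddCommMonoid E] (F : ℤ → E) (n : ℕ) :
    ∑ k ∈ Finset.Icc (-(n : ℤ)) n, F k = ∑ j ∈ Finset.range (2 * n + 1), F (j - n) := by
  refine Finset.sum_nbij' (fun k => (k + n).toNat) (fun j => j - n) ?_ ?_ ?_ ?_ ?_ <;>
    simp <;> grind

/-- The two-sided partial sums of `u`: the function `S : ℤ → E` with `S 0 = 0` and
`S (k + 1) - S k = u k`. -/
def intPartialSum [AddCommGroup E] (u : ℤ → E) : ℤ → E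
  | Int.ofNat n => ∑ k ∈ Finset.range n, u k
  | Int.negSucc n => -∑ k ∈ Finset.range (n + 1), u (Int.negSucc k)

lemma intPartialSum_add_one_sub [AddCommGroup E] (u : ℤ → E) (k : ℤ) :
    intPartialSum u (k + 1) - intPartialSum u k = u k := by
  match k with
  | Int.ofNat n => exact sub_eq_iff_eq_add'.2 (Finset.sum_range_succ (fun k : ℕ => u k) n)
  | Int.negSucc 0 => simp [intPartialSum]
  | Int.negSucc (n + 1) =>
    have hsucc : Int.negSucc (n + 1) + 1 = Int.negSucc n := by omega
    rw [hsucc, intPartialSum, intPartialSum, Finset.sum_range_succ _ (n + 1)]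
    abel

lemma sum_range_intCast_sub_eq_intPartialSum_sub [AddCommGroup E] (u : ℤ → E) (i M : ℕ) :
    ∑ j ∈ Finset.range i, u (j - M) = intPartialSum u (i - M) - intPartialSum u (-M) := by
  have htelescope := Finset.sum_range_sub (fun j : ℕ => intPartialSum u (j - M)) i
  rw [Nat.cast_zero, zero_sub] at htelescope
  rw [← htelescope]
  refine Finset.sum_congr rfl fun j _ => ?_
  rw [← intPartialSum_add_one_sub u, Nat.cast_succ, sub_add_eq_add_sub]

variable [NormedAddCommGroup E] {u : ℤ → E}

lemma eventually_forall_norm_intPartialSum_le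
    (hpos : (fun n : ℕ => ∑ k ∈ Finset.range n, u k) =o[atTop] fun n => (n : ℝ))
    (hneg : (fun n : ℕ => ∑ k ∈ Finset.range n, u (Int.negSucc k)) =o[atTop] fun n => (n : ℝ))
    {ε : ℝ} (hε : 0 < ε) :
    ∀ᶠ n : ℕ in atTop, ∀ k : ℤ, k.natAbs ≤ n → ‖intPartialSum u k‖ ≤ ε * n := by
  filter_upwards [eventually_forall_le_norm_le hpos hε, eventually_forall_le_norm_le hneg hε]
    with n hpos hneg k hk
  match k with
  | Int.ofNat k => exact hpos k hk
  | Int.negSucc k => simpa only [intPartialSum, norm_neg] using hneg (k + 1) hk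

lemma eventually_forall_norm_sum_range_intCast_sub_le
    (hpos : (fun n : ℕ => ∑ k ∈ Finset.range n, u k) =o[atTop] fun n => (n : ℝ))
    (hneg : (fun n : ℕ => ∑ k ∈ Finset.range n, u (Int.negSucc k)) =o[atTop] fun n => (n : ℝ))
    {ε : ℝ} (hε : 0 < ε) :
    ∀ᶠ M : ℕ in atTop, ∀ i ≤ 2 * M + 1,
      ‖∑ j ∈ Finset.range i, u (j - M)‖ ≤ ε * (2 * (M : ℝ) + 1) := by
  have hatTop : Tendsto (fun M : ℕ => 2 * M + 1) atTop atTop :=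
    tendsto_atTop_mono (fun M => show M ≤ 2 * M + 1 by omega) tendsto_id
  filter_upwards [hatTop.eventually (eventually_forall_norm_intPartialSum_le hpos hneg
    (half_pos hε))] with M hM i hi
  calc ‖∑ j ∈ Finset.range i, u (j - M)‖
      ≤ ‖intPartialSum u (i - M)‖ + ‖intPartialSum u (-M)‖ := by
        rw [sum_range_intCast_sub_eq_intPartialSum_sub]; exact norm_sub_le _ _
    _ ≤ ε / 2 * ↑(2 * M + 1) + ε / 2 * ↑(2 * M + 1) :=
        add_le_add (hM _ (by omega)) (hM _ (by omega))
    _ = ε * (2 * (M : ℝ) + 1) := by push_cast; ring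

end TwoSided

section Kernel

/-- The midpoint of the `j`-th of the `2M + 1` equal cells into which `[-1/2, 1/2]` is divided;
with `k = j - M` it is the evaluation point `k / (2M + 1)` of the kernel. -/
def cellMidpoint (M j : ℕ) : ℝ := (j - M) / (2 * M + 1)

variable {W : ℝ → ℝ}

lemma monotone_cellMidpoint (M : ℕ) : Monotone (cellMidpoint M) := by
  intro i j hij
  unfold cellMidpoint
  gcongr

lemma cellMidpoint_mem_cell (M j : ℕ) : cellMidpoint M j ∈
    Icc (-(1 : ℝ) / 2 + j / (2 * M + 1)) (-(1 : ℝ) / 2 + (j + 1 : ℕ) / (2 * M + 1)) := by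
  have hmid : cellMidpoint M j = -(1 : ℝ) / 2 + (j + 1 / 2) / (2 * M + 1) := by
    rw [cellMidpoint]; field_simp; ring
  rw [hmid]
  constructor <;> gcongr
  · linarith
  · push_cast; linarith

lemma cellMidpoint_mem_Icc {M j : ℕ} (hj : j ≤ 2 * M) :
    cellMidpoint M j ∈ Icc (-(1 : ℝ) / 2) (1 / 2) := by
  have hj : (j : ℝ) ≤ 2 * M := by exact_mod_cast hj
  have hN : (0 : ℝ) < 2 * M + 1 := by positivity
  rw [cellMidpoint, mem_Icc, le_div_iff₀ hN, div_le_iff₀ hN]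
  constructor <;> linarith [j.cast_nonneg (α := ℝ)]

lemma abs_sum_cellMidpoint_sub_integral_le (hW : BoundedVariationOn W (Icc (-(1 : ℝ) / 2) (1 / 2)))
    (M : ℕ) :
    |∑ j ∈ Finset.range (2 * M + 1), 1 / (2 * (M : ℝ) + 1) * W (cellMidpoint M j) -
        ∫ x in Icc (-(1 : ℝ) / 2) (1 / 2), W x| ≤
      1 / (2 * (M : ℝ) + 1) * (eVariationOn W (Icc (-(1 : ℝ) / 2) (1 / 2))).toReal := by
  set node : ℕ → ℝ := fun j => -(1 : ℝ) / 2 + j / (2 * M + 1) with hnode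
  have hmono : Monotone node := fun i j hij => by simp only [hnode]; gcongr
  have hstep (j : ℕ) : node (j + 1) - node j = 1 / (2 * M + 1) := by
    simp only [hnode]; push_cast; ring
  have hleft : node 0 = -(1 : ℝ) / 2 := by simp [hnode]
  have hright : node (2 * M + 1) = 1 / 2 := by simp only [hnode]; push_cast; field_simp; norm_num
  have hbound := abs_riemannSum_sub_intervalIntegral_le hmono (fun j _ => (hstep j).le)
    (fun j _ => cellMidpoint_mem_cell M j) (n := 2 * M + 1) (W := W) (by rwa [hleft, hright])
  simp only [hstep, hleft, hright] at hbound
  rwa [integral_Icc_eq_integral_Ioc, ← intervalIntegral.integral_of_le (by norm_num)]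

lemma tendsto_sum_cellMidpoint (hW : BoundedVariationOn W (Icc (-(1 : ℝ) / 2) (1 / 2))) :
    Tendsto (fun M : ℕ =>
        ∑ j ∈ Finset.range (2 * M + 1), 1 / (2 * (M : ℝ) + 1) * W (cellMidpoint M j))
      atTop (𝓝 (∫ x in Icc (-(1 : ℝ) / 2) (1 / 2), W x)) := by
  refine tendsto_iff_norm_sub_tendsto_zero.2 (squeeze_zero (fun _ => norm_nonneg _)
    (abs_sum_cellMidpoint_sub_integral_le hW) ?_)
  have hatTop : Tendsto (fun M : ℕ => 2 * (M : ℝ) + 1) atTop atTop :=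
    tendsto_atTop_add_const_right _ _
      (tendsto_natCast_atTop_atTop.const_mul_atTop two_pos)
  simpa using (hatTop.const_div_atTop 1).mul_const
    (eVariationOn W (Icc (-(1 : ℝ) / 2) (1 / 2))).toReal

variable {E : Type*} [NormedAddCommGroup E] [NormedSpace ℝ E] {u : ℤ → E}

lemma norm_sum_cellMidpoint_smul_le (hW : BoundedVariationOn W (Icc (-(1 : ℝ) / 2) (1 / 2)))
    {M : ℕ} {z : ℕ → E} {B : ℝ} (hB : ∀ i ≤ 2 * M + 1, ‖∑ j ∈ Finset.range i, z j‖ ≤ B) :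
    ‖∑ j ∈ Finset.range (2 * M + 1), W (cellMidpoint M j) • z j‖ ≤
      (|W 0| + 2 * (eVariationOn W (Icc (-(1 : ℝ) / 2) (1 / 2))).toReal) * B := by
  have hB0 : 0 ≤ B := (norm_nonneg _).trans (hB 0 (Nat.zero_le _))
  have hlast : ‖W (cellMidpoint M (2 * M))‖ ≤
      |W 0| + (eVariationOn W (Icc (-(1 : ℝ) / 2) (1 / 2))).toReal :=
    (norm_le_norm_add_norm_sub' _ (W 0)).trans (add_le_add_right
      (hW.dist_le (cellMidpoint_mem_Icc le_rfl) (by norm_num)) _)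
  refine (norm_sum_range_smul_le_of_boundedVariationOn hW ((monotone_cellMidpoint M).monotoneOn _)
    (fun j hj => cellMidpoint_mem_Icc hj.2) hB).trans (mul_le_mul_of_nonneg_right ?_ hB0)
  linarith

lemma tendsto_sum_cellMidpoint_smul_zero
    (hW : BoundedVariationOn W (Icc (-(1 : ℝ) / 2) (1 / 2)))
    (hpos : (fun n : ℕ => ∑ k ∈ Finset.range n, u k) =o[atTop] fun n => (n : ℝ))
    (hneg : (fun n : ℕ => ∑ k ∈ Finset.range n, u (Int.negSucc k)) =o[atTop] fun n => (n : ℝ)) :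
    Tendsto (fun M : ℕ => ∑ j ∈ Finset.range (2 * M + 1),
        (1 / (2 * (M : ℝ) + 1) * W (cellMidpoint M j)) • u (j - M)) atTop (𝓝 0) := by
  set K := |W 0| + 2 * (eVariationOn W (Icc (-(1 : ℝ) / 2) (1 / 2))).toReal
  have hK0 : 0 ≤ K := by positivity
  rw [NormedAddGroup.tendsto_nhds_zero]
  intro ε hε
  have hη : 0 < ε / (K + 1) := by positivity
  filter_upwards [eventually_forall_norm_sum_range_intCast_sub_le hpos hneg hη] with M hM
  simp only [mul_smul, ← Finset.smul_sum]
  calc ‖(1 / (2 * (M : ℝ) + 1)) • ∑ j ∈ Finset.range (2 * M + 1), W (cellMidpoint M j) • u (j - M)‖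
      = 1 / (2 * (M : ℝ) + 1) *
          ‖∑ j ∈ Finset.range (2 * M + 1), W (cellMidpoint M j) • u (j - M)‖ := by
        rw [norm_smul, Real.norm_of_nonneg (by positivity)]
    _ ≤ 1 / (2 * (M : ℝ) + 1) * (K * (ε / (K + 1) * (2 * M + 1))) := by
        gcongr; exact norm_sum_cellMidpoint_smul_le hW hM
    _ = K / (K + 1) * ε := by field_simp
    _ < ε := mul_lt_of_lt_one_left hε ((div_lt_one (by positivity)).2 (lt_add_one K))

theorem tendsto_sum_kernel_smul {m : E} (hW : BoundedVariationOn W (Icc (-(1 : ℝ) / 2) (1 / 2)))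
    (hpos : Tendsto (fun n : ℕ => (n : ℝ)⁻¹ • ∑ k ∈ Finset.range n, u k) atTop (𝓝 m))
    (hneg : Tendsto (fun n : ℕ => (n : ℝ)⁻¹ • ∑ k ∈ Finset.range n, u (Int.negSucc k))
      atTop (𝓝 m)) :
    Tendsto (fun M : ℕ => ∑ k ∈ Finset.Icc (-(M : ℤ)) M,
        (1 / (2 * (M : ℝ) + 1) * W (k / (2 * (M : ℝ) + 1))) • u k)
      atTop (𝓝 ((∫ x in Icc (-(1 : ℝ) / 2) (1 / 2), W x) • m)) := by
  have hcentered := tendsto_sum_cellMidpoint_smul_zero hW (u := fun k => u k - m)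
    (isLittleO_sum_range_sub_of_tendsto_average hpos)
    (isLittleO_sum_range_sub_of_tendsto_average hneg)
  have hlim := hcentered.add ((tendsto_sum_cellMidpoint hW).smul_const m)
  rw [zero_add] at hlim
  refine hlim.congr fun M => ?_
  rw [sum_Icc_neg_natCast_eq_sum_range, Finset.sum_smul, ← Finset.sum_add_distrib]
  refine Finset.sum_congr rfl fun j _ => ?_
  rw [← smul_add, sub_add_cancel, cellMidpoint]
  push_cast
  rfl

end Kernel

theorem stmt_7_general {Ω : Type*} [MeasurableSpace Ω] {μ : Measure Ω} [IsFiniteMeasure μ]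
    {T : Ω ≃ᵐ Ω} (hT : Ergodic T μ) {f : Ω → ℝ} (hf : Integrable f μ)
    {W : ℝ → ℝ} (hW : BoundedVariationOn W (Icc (-(1 : ℝ) / 2) (1 / 2))) :
    ∀ᵐ ω ∂μ, Tendsto (fun M : ℕ => ∑ k ∈ Finset.Icc (-(M : ℤ)) M,
        1 / (2 * (M : ℝ) + 1) * W (k / (2 * (M : ℝ) + 1)) * f (zIter T.toEquiv k ω))
      atTop (𝓝 ((∫ x in Icc (-(1 : ℝ) / 2) (1 / 2), W x) * ⨍ ω, f ω ∂μ)) := by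
  have hfuture := ae_tendsto_birkhoffAverage hT hf
  have hpast := hT.symm.quasiMeasurePreserving.ae (ae_tendsto_birkhoffAverage hT.symm hf)
  filter_upwards [hfuture, hpast] with ω hfuture hpast
  exact tendsto_sum_kernel_smul (u := fun k => f (zIter T.toEquiv k ω)) hW hfuture hpast

/-- Lemma A.1: if `{Y_t}` is a stationary ergodic sequence with `E|Y_t| < ∞`
(realized as `Y_t = f ∘ T^t` for an invertible ergodic measure-preserving `T` and an
integrable `f`) and `W : [−1/2,1/2] → ℝ` is a kernel of bounded variation with
`∫ W = 1`, then `Σ_{k=−M}^{M} (1/(2M+1)) W(k/(2M+1)) Y_k → E(Y_0)` almost surely. -/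
theorem stmt_7 {Ωs : Type*} [MeasureSpace Ωs] [IsProbabilityMeasure (ℙ : Measure Ωs)]
    (T : Ωs ≃ Ωs) (hT : Ergodic (⇑T) ℙ) (hTsymm : MeasurePreserving (⇑T.symm) ℙ ℙ)
    (f : Ωs → ℝ) (hf : Integrable f ℙ)
    (Y : ℤ → Ωs → ℝ) (hY : ∀ t ω, Y t ω = f (zIter T t ω))
    (W : ℝ → ℝ) (hWbv : BoundedVariationOn W (Set.Icc (-(1 : ℝ) / 2) (1 / 2)))
    (hWsupp : ∀ x ∉ Set.Icc (-(1 : ℝ) / 2) (1 / 2), W x = 0)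
    (hWint : ∫ x in Set.Icc (-(1 : ℝ) / 2) (1 / 2), W x = 1) :
    ∀ᵐ ω ∂ℙ, Tendsto (fun M : ℕ =>
        ∑ k ∈ Finset.Icc (-(M : ℤ)) (M : ℤ),
          (1 / (2 * (M : ℝ) + 1)) * W ((k : ℝ) / (2 * (M : ℝ) + 1)) * Y k ω)
      atTop (𝓝 (∫ ω, f ω ∂ℙ)) := by
  let e : Ωs ≃ᵐ Ωs := ⟨T, hT.measurable, hTsymm.measurable⟩
  simpa only [hY, hWint, one_mul, average_eq_integral] using
    stmt_7_general (T := e) hT hf hWbv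

end
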